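/- arXiv:1809.04731 — 6 statements merged into one kernel-verified Lean document; each statement's English description precedes it below -/
import Mathlib

section
/- Let W be a complex Banach space, U ⊆ ℂ an open set, and n a map assigning to each (z, w) ∈ U × W an ℝ-linear map n(z,w) : ℂ → W which is conjugate-linear, i.e. n(z,w)(iζ) = -i·(n(z,w)(ζ)) for all ζ ∈ ℂ. For (z,w) ∈ U × W define the ℝ-linear endomorphism 𝒥_{(z,w)} of ℂ × W by 𝒥_{(z,w)}(ζ, η) = (iζ, i·η - 2 n(z,w)(iζ)). Let s : U → W be ℝ-Fréchet differentiable with derivative Ds_z : ℂ → W at z. Then the graph map z ↦ (z, s(z)) is 𝒥-holomorphic — i.e. for every z ∈ U and ζ ∈ ℂ one has 𝒥_{(z,s(z))}(ζ, Ds_z(ζ)) = (iζ, Ds_z(iζ)) — if and only if s satisfies the perturbed Cauchy–Riemann equation (1/2)(Ds_z(ζ) + i·Ds_z(iζ)) + n(z, s(z))(ζ) = 0 for all z ∈ U and ζ ∈ ℂ. -/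
/-!
The two conditions are equivalent pointwise in `(z, ζ)`. The `ℂ`-components of the holomorphy equation
agree automatically. Since `n` is conjugate-linear, the difference of the `W`-components is `2i` times
the left side of the Cauchy–Riemann equation (`holomorphy_defect_eq`), and `2i` is invertible.
-/

/-- The defect of `𝒥`-holomorphy is `2i` times the Cauchy–Riemann defect, where
`a = Ds ζ`, `b = Ds (iζ)`, `c = n ζ` and `-(i c) = n (iζ)`. -/
lemma holomorphy_defect_eq {W : Type*} [NormedAddCommGroup W] [NormedSpace ℂ W] (a b c : W) :
    Complex.I • a - (2 : ℝ) • (-(Complex.I • c)) - b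
      = (2 * Complex.I) • ((1 / 2 : ℝ) • (a + Complex.I • b) + c) := by
  rw [← Complex.coe_smul, ← Complex.coe_smul]
  match_scalars
  · ring
  · ring
  · linear_combination -Complex.I_mul_I

/-- A map `s : U → W` has `𝒥`-holomorphic graph iff it satisfies the perturbed
Cauchy–Riemann equation. -/
theorem stmt_2 {W : Type*} [NormedAddCommGroup W] [NormedSpace ℂ W]
    (U : Set ℂ) (hU : IsOpen U)
    (n : ℂ → W → (ℂ →ₗ[ℝ] W))
    (hn : ∀ (z : ℂ) (w : W) (ζ : ℂ),
      n z w (Complex.I * ζ) = -(Complex.I • n z w ζ))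
    (𝒥 : ℂ → W → ((ℂ × W) →ₗ[ℝ] (ℂ × W)))
    (h𝒥 : ∀ (z : ℂ) (w : W) (ζ : ℂ) (η : W),
      𝒥 z w (ζ, η)
        = (Complex.I * ζ, Complex.I • η - (2 : ℝ) • n z w (Complex.I * ζ)))
    (s : ℂ → W) (Ds : ℂ → (ℂ →L[ℝ] W))
    (hs : ∀ z ∈ U, HasFDerivAt s (Ds z) z) :
    (∀ z ∈ U, ∀ ζ : ℂ,
        𝒥 z (s z) (ζ, Ds z ζ) = (Complex.I * ζ, Ds z (Complex.I * ζ)))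
      ↔ (∀ z ∈ U, ∀ ζ : ℂ,
        (1 / 2 : ℝ) • (Ds z ζ + Complex.I • Ds z (Complex.I * ζ))
          + n z (s z) ζ = 0) := by
  have key (z ζ : ℂ) :
      𝒥 z (s z) (ζ, Ds z ζ) = (Complex.I * ζ, Ds z (Complex.I * ζ)) ↔
        (1 / 2 : ℝ) • (Ds z ζ + Complex.I • Ds z (Complex.I * ζ)) + n z (s z) ζ = 0 := by
    have h2I : (2 * Complex.I : ℂ) ≠ 0 := mul_ne_zero two_ne_zero Complex.I_ne_zero
    rw [h𝒥, hn, Prod.mk_right_inj, ← sub_eq_zero, holomorphy_defect_eq,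
      smul_eq_zero_iff_right h2I]
  simp only [key]
end

section
/- Let V and W be finite-dimensional real inner product spaces with complex structures J_V and J_W, and let ω_V, ω_W be alternating bilinear forms on V and W respectively satisfying ω_V(v, J_V v) ≥ |v|² for all v ∈ V and ω_W(w, J_W w) ≥ |w|² for all w ∈ W. Let L : V → W be an ℝ-linear map and c > 0 a constant such that |ω_W(w, L v)| ≤ c|w||v| for all v ∈ V, w ∈ W. If τ > c²/4, then the alternating bilinear form Ω on V × W defined by Ω((v,w),(v',w')) = τ ω_V(v,v') + ω_W(w,w') tames the endomorphism 𝒥(v,w) = (J_V v, L v + J_W w), i.e. Ω(x, 𝒥 x) > 0 for every nonzero x ∈ V × W. -/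
/-! The cross term `ω_W(w, L v)` is at least `-c‖w‖‖v‖`, so `Ω(x, 𝒥 x)` is bounded below by the
quadratic form `τ a² - c a b + b²` in `a = ‖v‖`, `b = ‖w‖`. Its discriminant is `c² - 4τ < 0`, so it
is positive definite, as completing the square in `b` shows. -/

/-- Quantitative taming estimate: `τ ω_V ⊕ ω_W` tames `𝒥 = (J_V, L + J_W)`
provided `τ > c²/4`. -/
theorem stmt_3 {V W : Type*}
    [NormedAddCommGroup V] [InnerProductSpace ℝ V] [FiniteDimensional ℝ V]
    [NormedAddCommGroup W] [InnerProductSpace ℝ W] [FiniteDimensional ℝ W]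
    (JV : V →ₗ[ℝ] V) (JW : W →ₗ[ℝ] W)
    (hJV : ∀ v : V, JV (JV v) = -v) (hJW : ∀ w : W, JW (JW w) = -w)
    (ωV : V →ₗ[ℝ] V →ₗ[ℝ] ℝ) (ωW : W →ₗ[ℝ] W →ₗ[ℝ] ℝ)
    (hωV_alt : ∀ v : V, ωV v v = 0) (hωW_alt : ∀ w : W, ωW w w = 0)
    (hωV : ∀ v : V, ‖v‖ ^ 2 ≤ ωV v (JV v))
    (hωW : ∀ w : W, ‖w‖ ^ 2 ≤ ωW w (JW w))
    (L : V →ₗ[ℝ] W) (c : ℝ) (hc : 0 < c)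
    (hL : ∀ (v : V) (w : W), |ωW w (L v)| ≤ c * ‖w‖ * ‖v‖)
    (τ : ℝ) (hτ : c ^ 2 / 4 < τ) :
    ∀ x : V × W, x ≠ 0 →
      0 < τ * ωV x.1 (JV x.1) + ωW x.2 (L x.1 + JW x.2) := by
  rintro ⟨v, w⟩ hx
  have h₁ : τ * ‖v‖ ^ 2 ≤ τ * ωV v (JV v) :=
    mul_le_mul_of_nonneg_left (hωV v) ((by positivity : (0 : ℝ) ≤ c ^ 2 / 4).trans hτ.le)
  have h₂ := hωW w
  have h₃ := (abs_le.mp (hL v w)).1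
  -- Completing the square in the lower bound `τ‖v‖² - c‖w‖‖v‖ + ‖w‖²`.
  have key : τ * ‖v‖ ^ 2 - c * ‖w‖ * ‖v‖ + ‖w‖ ^ 2
      = (τ - c ^ 2 / 4) * ‖v‖ ^ 2 + (‖w‖ - c / 2 * ‖v‖) ^ 2 := by ring
  have pos : 0 < (τ - c ^ 2 / 4) * ‖v‖ ^ 2 + (‖w‖ - c / 2 * ‖v‖) ^ 2 := by
    have hτ' : 0 < τ - c ^ 2 / 4 := sub_pos.mpr hτ
    by_cases hv : v = 0
    · have hw : w ≠ 0 := fun hw => hx (by simp [hv, hw])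
      have := norm_pos_iff.mpr hw
      simp only [hv, norm_zero, mul_zero, sub_zero]
      positivity
    · have := norm_pos_iff.mpr hv
      positivity
  simp only [map_add]
  linarith
end

section
/- Let W be a finite-dimensional complex inner product space, with symplectic forms ω_ℂ(ζ,ζ') = Im(ζ̄ζ') on ℂ and ω_W(η,η') = Im⟨η,η'⟩ on W (the Hermitian inner product being complex-linear in its second argument). Let U ⊆ ℂ, let c > 0, and let n assign to each (z,w) ∈ U × W with ‖w‖ ≤ 1 an ℝ-linear conjugate-linear map n(z,w) : ℂ → W (i.e. n(z,w)(iζ) = -i·n(z,w)(ζ)) satisfying ‖n(z,w)(ζ)‖ ≤ c‖ζ‖ for all ζ ∈ ℂ. Define 𝒥_{(z,w)}(ζ,η) = (iζ, i·η - 2 n(z,w)(iζ)) on ℂ × W. If τ > c², then the constant alternating form Ω((ζ,η),(ζ',η')) = τ ω_ℂ(ζ,ζ') + ω_W(η,η') tames 𝒥_{(z,w)} at every point (z,w) ∈ U × W with ‖w‖ ≤ 1: Ω(x, 𝒥_{(z,w)} x) > 0 for every nonzero x ∈ ℂ × W. -/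
open scoped InnerProductSpace

/-!
For `x = (ζ, η)` the taming form evaluates to
`Ω(x, 𝒥 x) = τ ‖ζ‖² + ‖η‖² - 2 Im ⟪η, n(iζ)⟫`. By Cauchy-Schwarz and `‖n(iζ)‖ ≤ c ‖ζ‖` the cross term
is at most `2 c ‖ζ‖ ‖η‖`, so `Ω(x, 𝒥 x) ≥ (‖η‖ - c ‖ζ‖)² + (τ - c²) ‖ζ‖²`. Since `τ > c²`, this lower
bound vanishes only when `ζ = 0` and `η = 0`.
-/

/-- The constant form `τ ω_ℂ ⊕ ω_W` tames `𝒥_{(z,w)}(ζ,η) = (iζ, iη - 2 n(z,w)(iζ))`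
on the unit disc bundle provided `τ > c²`. -/
theorem stmt_4 {W : Type*}
    [NormedAddCommGroup W] [InnerProductSpace ℂ W] [FiniteDimensional ℂ W]
    (ωC : ℂ → ℂ → ℝ) (hωC : ∀ ζ ζ' : ℂ, ωC ζ ζ' = ((starRingEnd ℂ) ζ * ζ').im)
    (ωW : W → W → ℝ) (hωW : ∀ η η' : W, ωW η η' = (⟪η, η'⟫_ℂ).im)
    (U : Set ℂ) (c : ℝ) (hc : 0 < c)
    (n : ℂ → W → (ℂ →ₗ[ℝ] W))
    (hn_anti : ∀ z ∈ U, ∀ w : W, ‖w‖ ≤ 1 → ∀ ζ : ℂ,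
      n z w (Complex.I * ζ) = -(Complex.I • n z w ζ))
    (hn_bound : ∀ z ∈ U, ∀ w : W, ‖w‖ ≤ 1 → ∀ ζ : ℂ,
      ‖n z w ζ‖ ≤ c * ‖ζ‖)
    (𝒥 : ℂ → W → ((ℂ × W) →ₗ[ℝ] (ℂ × W)))
    (h𝒥 : ∀ (z : ℂ) (w : W) (ζ : ℂ) (η : W),
      𝒥 z w (ζ, η)
        = (Complex.I * ζ, Complex.I • η - (2 : ℝ) • n z w (Complex.I * ζ)))
    (τ : ℝ) (hτ : c ^ 2 < τ) :
    ∀ z ∈ U, ∀ w : W, ‖w‖ ≤ 1 → ∀ x : ℂ × W, x ≠ 0 →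
      0 < τ * ωC x.1 (𝒥 z w x).1 + ωW x.2 (𝒥 z w x).2 := by
  intro z hz w hw x hx
  obtain ⟨ζ, η⟩ := x
  rw [h𝒥, hωC, hωW]
  have hC : ((starRingEnd ℂ) ζ * (Complex.I * ζ)).im = ‖ζ‖ ^ 2 := by
    rw [mul_left_comm, Complex.conj_mul', ← Complex.ofReal_pow, Complex.I_mul_im,
      Complex.ofReal_re]
  have hη : (⟪η, Complex.I • η⟫_ℂ).im = ‖η‖ ^ 2 := by
    rw [inner_smul_right, Complex.I_mul_im]
    exact inner_self_eq_norm_sq (𝕜 := ℂ) η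
  have hr : (⟪η, (2 : ℝ) • n z w (Complex.I * ζ)⟫_ℂ).im
      = 2 * (⟪η, n z w (Complex.I * ζ)⟫_ℂ).im := by
    rw [inner_smul_right_eq_smul, Complex.smul_im, smul_eq_mul]
  have hcross : (⟪η, n z w (Complex.I * ζ)⟫_ℂ).im ≤ ‖η‖ * (c * ‖ζ‖) := by
    have hb := hn_bound z hz w hw (Complex.I * ζ)
    rw [norm_mul, Complex.norm_I, one_mul] at hb
    calc (⟪η, n z w (Complex.I * ζ)⟫_ℂ).im
        ≤ ‖⟪η, n z w (Complex.I * ζ)⟫_ℂ‖ := (le_abs_self _).trans (Complex.abs_im_le_norm _)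
      _ ≤ ‖η‖ * ‖n z w (Complex.I * ζ)‖ := norm_inner_le_norm _ _
      _ ≤ ‖η‖ * (c * ‖ζ‖) := by gcongr
  dsimp only
  rw [hC, inner_sub_right, Complex.sub_im, hη, hr]
  have hsq := sq_nonneg (‖η‖ - c * ‖ζ‖)
  by_cases hζ : ζ = 0
  · -- The square alone gives only `0 ≤ ‖η‖ ^ 2`; strictness comes from `η ≠ 0`.
    have hη0 : η ≠ 0 := by
      rintro rfl
      exact hx (by rw [hζ]; rfl)
    subst hζ
    have hpos : 0 < ‖η‖ ^ 2 := by positivity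
    rw [norm_zero] at hcross ⊢
    nlinarith
  · have hpos : 0 < (τ - c ^ 2) * ‖ζ‖ ^ 2 :=
      mul_pos (sub_pos.mpr hτ) (by positivity)
    nlinarith
end

section
/- Let V and W be finite-dimensional real normed spaces. Let F : W → End_ℝ(V × W) be a map which is Fréchet differentiable at 0, with derivative DF(0) : W → End_ℝ(V × W), and suppose F(0) is block diagonal: F(0)(v,w) = (j v, i w) for some j ∈ End_ℝ(V) and i ∈ End_ℝ(W). For λ > 0 let R_λ ∈ End_ℝ(V × W) be R_λ(v,w) = (v, λw), with inverse R_λ^{-1}(v,w) = (v, λ^{-1}w). Then for every fixed w₀ ∈ W, as λ → 0⁺ the conjugated operators R_λ^{-1} ∘ F(λ w₀) ∘ R_λ converge in operator norm to the endomorphism (v,w) ↦ (j v, i w + π_W(DF(0)(w₀)(v, 0))), where π_W : V × W → W is the projection. In other words, the limit equals F(0) plus the lower-left block of the derivative DF(0)(w₀). -/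
/-!
Write `P` and `Q` for the projections of `V × W` onto `V × 0` and `0 × W`. Splitting into blocks,
the conjugate of `A = F (lam • w₀)` is `P A P + Q A Q + lam • P A Q + lam⁻¹ • Q A P`.
As `F 0` is block diagonal, `Q (F 0) P = 0`, so the only singular term equals
`Q ∘ (lam⁻¹ • (F (lam • w₀) - F 0)) ∘ P`, whose middle factor is the difference quotient
converging to `DF w₀`. The other terms converge because `F` is continuous at `0`, and
composition of operators is continuous in the operator norm.
-/

open Filter Topology

/-- Rescaled conjugates of a differentiable family of endomorphisms converge in
operator norm to the block-diagonal value at `0` plus the lower-left block of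
the derivative. -/
theorem stmt_5 {V W : Type*}
    [NormedAddCommGroup V] [NormedSpace ℝ V] [FiniteDimensional ℝ V]
    [NormedAddCommGroup W] [NormedSpace ℝ W] [FiniteDimensional ℝ W]
    (F : W → ((V × W) →L[ℝ] (V × W)))
    (DF : W →L[ℝ] ((V × W) →L[ℝ] (V × W)))
    (hF : HasFDerivAt F DF 0)
    (j : V →L[ℝ] V) (i : W →L[ℝ] W)
    (hF0 : ∀ (v : V) (w : W), F 0 (v, w) = (j v, i w))
    (R Rinv : ℝ → ((V × W) →L[ℝ] (V × W)))
    (hR : ∀ (lam : ℝ) (v : V) (w : W), R lam (v, w) = (v, lam • w))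
    (hRinv : ∀ lam : ℝ, 0 < lam → ∀ (v : V) (w : W),
      Rinv lam (v, w) = (v, lam⁻¹ • w))
    (w₀ : W) (G : (V × W) →L[ℝ] (V × W))
    (hG : ∀ (v : V) (w : W), G (v, w) = (j v, i w + (DF w₀ (v, 0)).2)) :
    Tendsto (fun lam : ℝ => Rinv lam ∘L F (lam • w₀) ∘L R lam)
      (𝓝[>] (0 : ℝ)) (𝓝 G) := by
  let P : (V × W) →L[ℝ] (V × W) := .inl ℝ V W ∘L .fst ℝ V W
  let Q : (V × W) →L[ℝ] (V × W) := .inr ℝ V W ∘L .snd ℝ V W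
  have hline : HasDerivAt (fun lam : ℝ => F (lam • w₀)) (DF w₀) 0 := by
    have h1 : HasDerivAt (fun lam : ℝ => lam • w₀) w₀ 0 := by
      simpa using (hasDerivAt_id (0 : ℝ)).smul_const w₀
    have h2 : HasFDerivAt F DF ((0 : ℝ) • w₀) := by simpa using hF
    exact h2.comp_hasDerivAt (0 : ℝ) h1
  have hA : Tendsto (fun lam : ℝ => F (lam • w₀)) (𝓝[>] (0 : ℝ)) (𝓝 (F 0)) := by
    simpa using hline.continuousAt.tendsto.mono_left nhdsWithin_le_nhds
  have hD : Tendsto (fun lam : ℝ => lam⁻¹ • (F (lam • w₀) - F 0))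
      (𝓝[>] (0 : ℝ)) (𝓝 (DF w₀)) := by
    simpa using hline.tendsto_slope_zero_right
  have hlam : Tendsto (fun lam : ℝ => lam) (𝓝[>] (0 : ℝ)) (𝓝 0) :=
    tendsto_id.mono_left nhdsWithin_le_nhds
  have hblock : ∀ S T : (V × W) →L[ℝ] (V × W),
      Continuous fun A : (V × W) →L[ℝ] (V × W) => S ∘L A ∘L T :=
    fun S T => continuous_const.clm_comp (continuous_id.clm_comp continuous_const)
  have hsum := ((((hblock P P).tendsto _).comp hA).add (((hblock Q Q).tendsto _).comp hA)).add
    ((hlam.smul (((hblock P Q).tendsto _).comp hA)).add (((hblock Q P).tendsto _).comp hD))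
  have hlimit : P ∘L F 0 ∘L P + Q ∘L F 0 ∘L Q +
      ((0 : ℝ) • (P ∘L F 0 ∘L Q) + Q ∘L DF w₀ ∘L P) = G := by
    refine ContinuousLinearMap.ext fun ⟨v, w⟩ => ?_
    simp [P, Q, hF0, hG]
  rw [← hlimit]
  refine hsum.congr' ?_
  filter_upwards [self_mem_nhdsWithin] with lam hpos
  have hne : lam ≠ 0 := ne_of_gt hpos
  refine ContinuousLinearMap.ext fun ⟨v, w⟩ => ?_
  have hsplit : F (lam • w₀) (v, lam • w) =
      F (lam • w₀) (v, 0) + lam • F (lam • w₀) (0, w) := by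
    rw [← map_smul, ← map_add]
    simp
  have hinv : ∀ x : V × W, Rinv lam x = (x.1, lam⁻¹ • x.2) :=
    fun x => hRinv lam hpos x.1 x.2
  simp [P, Q, hR, hinv, hsplit, hF0, smul_smul, hne, add_comm]
end

section
/- Let X be a metric space and K ⊆ X a compact subset. Let (μ_n)_{n∈ℕ} and μ be nonzero finite Borel measures on X with supp(μ_n) ⊆ K for all n, such that μ_n converges weakly to μ (∫ f dμ_n → ∫ f dμ for every bounded continuous f : X → ℝ). Suppose there exist c > 0 and r₀ > 0 such that for every n, every x ∈ supp(μ_n) and every r ∈ (0, r₀], one has μ_n(B_r(x)) ≥ c r². Then sup{ d(x, supp(μ)) : x ∈ supp(μ_n) } → 0 as n → ∞. -/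
/-! The supports satisfy the upper (Kuratowski) semicontinuity
`x k ∈ supp (μ (φ k))`, `x k → a`, `φ → ∞` implies `a ∈ supp ν`: the density bound prevents the mass
of `μ (φ k)` near `a` from vanishing in the limit, and testing weak convergence against a bump
function at `a` transfers this mass to `ν` (`mem_measureSupport_of_tendsto`). If the suprema did not
tend to zero, compactness of `K` would give such a sequence staying a fixed distance away from
`supp ν`, which contradicts `a ∈ supp ν`. Only balls and one bump function are used, so
separability of the space plays no role. -/

open MeasureTheory Filter Topology Metric

/-- The topological support of a Borel measure on a metric space: the set of
points all of whose open neighborhoods (equivalently, all open balls around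
which) have positive measure. -/
def measureSupport {X : Type*} [MetricSpace X] [MeasurableSpace X]
    (μ : Measure X) : Set X :=
  {x : X | ∀ r : ℝ, 0 < r → 0 < μ (Metric.ball x r)}

/-- A continuous bump function at `a`. For `0 < r` it is `1` on the ball of radius `r / 2`, takes values in
`[0, 1]`, and vanishes outside the ball of radius `r`. -/
noncomputable def ballBump {X : Type*} [MetricSpace X] (a : X) (r : ℝ) :
    BoundedContinuousFunction X ℝ :=
  BoundedContinuousFunction.ofNormedAddCommGroup
    (fun y => max 0 (min 1 (2 - 2 * dist y a / r))) (by fun_prop) 1 (by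
      intro y
      rw [Real.norm_eq_abs, abs_of_nonneg (le_max_left _ _)]
      exact max_le zero_le_one (min_le_left _ _))

lemma ballBump_nonneg {X : Type*} [MetricSpace X] (a : X) (r : ℝ) (y : X) :
    0 ≤ ballBump a r y := le_max_left _ _

lemma ballBump_eq_one {X : Type*} [MetricSpace X] {a : X} {r : ℝ} (hr : 0 < r) {y : X}
    (hy : y ∈ ball a (r / 2)) : ballBump a r y = 1 := by
  change max 0 (min 1 (2 - 2 * dist y a / r)) = 1
  have h : 2 * dist y a / r ≤ 1 := by
    rw [div_le_one hr]
    linarith [mem_ball.1 hy]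
  rw [min_eq_left (by linarith), max_eq_right zero_le_one]

lemma ballBump_eq_zero {X : Type*} [MetricSpace X] {a : X} {r : ℝ} (hr : 0 < r) {y : X}
    (hy : y ∉ ball a r) : ballBump a r y = 0 := by
  change max 0 (min 1 (2 - 2 * dist y a / r)) = 0
  have h : 2 ≤ 2 * dist y a / r := by
    rw [le_div_iff₀ hr]
    linarith [not_lt.1 (fun h => hy (mem_ball.2 h))]
  exact max_eq_left ((min_le_right _ _).trans (by linarith))

/-- Limits of points in the supports of measures with a uniform lower density bound lie in the
support of the weak limit. -/
lemma mem_measureSupport_of_tendsto {X : Type*} [MetricSpace X] [MeasurableSpace X] [BorelSpace X]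
    (μ : ℕ → Measure X) (ν : Measure X) [∀ n, IsFiniteMeasure (μ n)]
    (hweak : ∀ f : BoundedContinuousFunction X ℝ,
      Tendsto (fun n => ∫ x, f x ∂(μ n)) atTop (𝓝 (∫ x, f x ∂ν)))
    (c r₀ : ℝ) (hc : 0 < c) (hr₀ : 0 < r₀)
    (hdens : ∀ n, ∀ x ∈ measureSupport (μ n), ∀ r : ℝ, 0 < r → r ≤ r₀ →
      ENNReal.ofReal (c * r ^ 2) ≤ μ n (Metric.ball x r))
    (φ : ℕ → ℕ) (hφ : Tendsto φ atTop atTop) (x : ℕ → X)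
    (hx : ∀ k, x k ∈ measureSupport (μ (φ k))) (a : X) (ha : Tendsto x atTop (𝓝 a)) :
    a ∈ measureSupport ν := by
  intro r hr
  by_contra hν
  have hν : ν (ball a r) = 0 := by simpa using hν
  have hint : ∫ y, ballBump a r y ∂ν = 0 := by
    refine integral_eq_zero_of_ae ?_
    have : ∀ᵐ y ∂ν, y ∉ ball a r := measure_eq_zero_iff_ae_notMem.1 hν
    filter_upwards [this] with y hy using ballBump_eq_zero hr hy
  -- A radius admissible in the density bound, with `ball (x k) s ⊆ ball a (r / 2)` eventually.
  obtain ⟨s, hs, hsr, hsr₀⟩ : ∃ s : ℝ, 0 < s ∧ s ≤ r / 4 ∧ s ≤ r₀ :=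
    ⟨min (r / 4) r₀, lt_min (by linarith) hr₀, min_le_left _ _, min_le_right _ _⟩
  have hlow : ∀ᶠ k in atTop, c * s ^ 2 ≤ ∫ y, ballBump a r y ∂(μ (φ k)) := by
    filter_upwards [ha.eventually (ball_mem_nhds a (by linarith : 0 < r / 4))] with k hk
    have hsub : ball (x k) s ⊆ ball a (r / 2) :=
      ball_subset_ball' (by linarith [mem_ball.1 hk])
    calc c * s ^ 2 ≤ (μ (φ k)).real (ball a (r / 2)) :=
          (ENNReal.ofReal_le_iff_le_toReal (measure_ne_top _ _)).1
            ((hdens _ _ (hx k) s hs hsr₀).trans (measure_mono hsub))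
      _ = ∫ y, (ball a (r / 2)).indicator 1 y ∂(μ (φ k)) :=
          (integral_indicator_one measurableSet_ball).symm
      _ ≤ ∫ y, ballBump a r y ∂(μ (φ k)) := by
          refine integral_mono ((integrable_const (1 : ℝ)).indicator measurableSet_ball)
            ((ballBump a r).integrable _) fun y => ?_
          by_cases hy : y ∈ ball a (r / 2)
          · simp only [Set.indicator_of_mem hy, Pi.one_apply, ballBump_eq_one hr hy, le_refl]
          · simp only [Set.indicator_of_notMem hy, ballBump_nonneg]
  have hle := ge_of_tendsto ((hweak (ballBump a r)).comp hφ) hlow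
  rw [hint] at hle
  have : 0 < c * s ^ 2 := by positivity
  linarith

/-- Weak convergence plus a uniform lower density bound for the approximating
measures, with supports in a fixed compact set, implies that the supports of
`μ n` eventually lie close to the support of the limit:
`sup { d(x, supp ν) : x ∈ supp (μ n) } → 0`. -/
theorem stmt_7 {X : Type*} [MetricSpace X] [MeasurableSpace X] [BorelSpace X]
    (K : Set X) (hK : IsCompact K)
    (μ : ℕ → Measure X) (ν : Measure X)
    [∀ n, IsFiniteMeasure (μ n)] [IsFiniteMeasure ν]
    (hμ0 : ∀ n, μ n ≠ 0) (hν0 : ν ≠ 0)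
    (hμK : ∀ n, measureSupport (μ n) ⊆ K)
    (hweak : ∀ f : BoundedContinuousFunction X ℝ,
      Tendsto (fun n => ∫ x, f x ∂(μ n)) atTop (𝓝 (∫ x, f x ∂ν)))
    (c r₀ : ℝ) (hc : 0 < c) (hr₀ : 0 < r₀)
    (hdens : ∀ n, ∀ x ∈ measureSupport (μ n), ∀ r : ℝ, 0 < r → r ≤ r₀ →
      ENNReal.ofReal (c * r ^ 2) ≤ μ n (Metric.ball x r)) :
    Tendsto (fun n =>
        ⨆ x ∈ measureSupport (μ n), EMetric.infEdist x (measureSupport ν))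
      atTop (𝓝 0) := by
  rw [ENNReal.tendsto_nhds_zero]
  intro ε hε
  by_contra hfreq
  have hfreq : ∃ᶠ n in atTop,
      ∃ x ∈ measureSupport (μ n), ε < EMetric.infEdist x (measureSupport ν) := by
    refine (not_eventually.1 hfreq).mono fun n hn => ?_
    by_contra! h
    exact hn (iSup₂_le h)
  obtain ⟨φ, hφ, hx⟩ := extraction_of_frequently_atTop hfreq
  choose x hxs hxε using hx
  obtain ⟨a, -, ψ, hψ, ha⟩ := hK.tendsto_subseq fun k => hμK _ (hxs k)
  have haν : a ∈ measureSupport ν :=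
    mem_measureSupport_of_tendsto μ ν hweak c r₀ hc hr₀ hdens (φ ∘ ψ)
      (hφ.comp hψ).tendsto_atTop (x ∘ ψ) (fun k => hxs (ψ k)) a ha
  obtain ⟨k, hk⟩ := (ha.eventually (Metric.eball_mem_nhds a hε)).exists
  exact absurd ((hxε (ψ k)).trans_le (Metric.infEDist_le_edist_of_mem haν)) (not_lt.2 (le_of_lt hk))
end

section
/- Let X be a metric space, and let (μ_n)_{n∈ℕ} and μ be finite Borel measures on X such that μ_n converges weakly to μ, i.e. ∫ f dμ_n → ∫ f dμ for every bounded continuous f : X → ℝ. Let x_n ∈ supp(μ_n) be a sequence converging to a point x ∈ X, and suppose there are constants c > 0 and r₀ > 0 such that μ_n(B_r(x_n)) ≥ c r² for every n ∈ ℕ and every r ∈ (0, r₀]. Then x ∈ supp(μ). -/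
/-!
By the portmanteau theorem, weak convergence gives `limsup μ n F ≤ ν F` for closed `F`. Applied to
a closed ball `F` around `x₀`, this bounds `ν F` below by a positive constant: for large `n`, `F`
contains a ball of fixed radius `ρ` around `x n`, whose `μ n`-measure is at least `c ρ²`.
-/

open MeasureTheory Filter Topology Metric

/-- If `x_n ∈ supp (μ n)`, `x_n → x`, `μ n → ν` weakly, and the measures `μ n`
satisfy a uniform lower density bound at `x_n`, then `x ∈ supp ν`. -/
theorem stmt_9 {X : Type*} [MetricSpace X] [MeasurableSpace X] [BorelSpace X]
    (μ : ℕ → Measure X) (ν : Measure X)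
    [∀ n, IsFiniteMeasure (μ n)] [IsFiniteMeasure ν]
    (hweak : ∀ f : BoundedContinuousFunction X ℝ,
      Tendsto (fun n => ∫ x, f x ∂(μ n)) atTop (𝓝 (∫ x, f x ∂ν)))
    (x : ℕ → X) (hx : ∀ n, x n ∈ measureSupport (μ n))
    (x₀ : X) (hlim : Tendsto x atTop (𝓝 x₀))
    (c r₀ : ℝ) (hc : 0 < c) (hr₀ : 0 < r₀)
    (hdens : ∀ n, ∀ r : ℝ, 0 < r → r ≤ r₀ →
      ENNReal.ofReal (c * r ^ 2) ≤ μ n (Metric.ball (x n) r)) :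
    x₀ ∈ measureSupport ν := by
  intro r hr
  -- Weak convergence, restated in the topology of `FiniteMeasure X`.
  let μF : ℕ → FiniteMeasure X := fun n => ⟨μ n, inferInstance⟩
  let νF : FiniteMeasure X := ⟨ν, inferInstance⟩
  have hT : Tendsto μF atTop (𝓝 νF) :=
    FiniteMeasure.tendsto_iff_forall_integral_tendsto.mpr hweak
  have hport := FiniteMeasure.limsup_measure_closed_le_of_tendsto hT
    (F := closedBall x₀ (r / 2)) isClosed_closedBall
  set ρ := min (r / 4) r₀ with hρ
  have hρpos : 0 < ρ := lt_min (by positivity) hr₀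
  -- Once `dist (x n) x₀ < r / 4`, the ball `B_ρ(x n)` lies in the closed ball of radius `r / 2`.
  have hev : ∀ᶠ n in atTop, ENNReal.ofReal (c * ρ ^ 2) ≤ μ n (closedBall x₀ (r / 2)) := by
    filter_upwards [Metric.tendsto_nhds.mp hlim (r / 4) (by positivity)] with n hn
    refine (hdens n ρ hρpos (min_le_right _ _)).trans (measure_mono ?_)
    refine ball_subset_closedBall.trans (closedBall_subset_closedBall' ?_)
    linarith [min_le_left (r / 4) r₀]
  calc 0 < ENNReal.ofReal (c * ρ ^ 2) := ENNReal.ofReal_pos.mpr (by positivity)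
    _ ≤ limsup (fun n => μ n (closedBall x₀ (r / 2))) atTop :=
        le_limsup_of_frequently_le hev.frequently
    _ ≤ ν (closedBall x₀ (r / 2)) := hport
    _ ≤ ν (ball x₀ r) := measure_mono (closedBall_subset_ball (by linarith))
end
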